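/- arXiv:2112.15261 — 7 statements merged into one kernel-verified Lean document; each statement's English description precedes it below -/
import Mathlib

section
/- Let a_{21}, b_1, b_2 be real numbers with b_1 > 0, b_2 > 0, defining a 2-stage explicit Runge–Kutta method (a_{11} = a_{12} = a_{22} = 0, c_1 = 0, c_2 = a_{21}). Suppose the second-order conditions b_1 + b_2 = 1 and b_2·a_{21} = 1/2 hold, and suppose c̄_1 = c_1, where c̄_i = Σ_j ā_{ij} with adjoint coefficients ā_{ij} = b_j − b_j·a_{ji}/b_i. Then necessarily a_{21} = 1 and b_1 = b_2 = 1/2; moreover, for this method one additionally has c̄_2 = c_2. -/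
/-- A 2-stage explicit Runge–Kutta method of second order whose first adjoint
abscissa satisfies `c̄_1 = c_1` must be the A method (Heun/explicit
trapezoidal): `a_{21} = 1`, `b_1 = b_2 = 1/2`; and then also `c̄_2 = c_2`. -/
theorem stmt_2 (a : Fin 2 → Fin 2 → ℝ) (b : Fin 2 → ℝ)
    (hb : ∀ i, 0 < b i)
    (hexp : ∀ i j : Fin 2, i ≤ j → a i j = 0)
    (c : Fin 2 → ℝ) (hc : ∀ i, c i = ∑ j, a i j)
    (abar : Fin 2 → Fin 2 → ℝ)
    (habar : ∀ i j, abar i j = b j - b j * a j i / b i)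
    (cbar : Fin 2 → ℝ) (hcbar : ∀ i, cbar i = ∑ j, abar i j)
    (ord1 : b 0 + b 1 = 1) (ord2 : b 1 * a 1 0 = 1 / 2)
    (hceq : cbar 0 = c 0) :
    a 1 0 = 1 ∧ b 0 = 1 / 2 ∧ b 1 = 1 / 2 ∧ cbar 1 = c 1 := by
  have h00 : a 0 0 = 0 := hexp 0 0 le_rfl
  have h01 : a 0 1 = 0 := hexp 0 1 (by decide)
  have h11 : a 1 1 = 0 := hexp 1 1 le_rfl
  have hb0 : b 0 ≠ 0 := ne_of_gt (hb 0)
  -- By the order conditions, `c̄₁ = c₁` reads `1 - (1/2) / b₁ = 0`, which determines `b₁`.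
  have hb0_eq : b 0 = 1 / 2 := by
    rw [hcbar, hc, Fin.sum_univ_two, Fin.sum_univ_two, habar, habar, h00, h01, ord2] at hceq
    field_simp at hceq
    nlinarith
  have hb1_eq : b 1 = 1 / 2 := by linarith
  have ha : a 1 0 = 1 := by
    rw [hb1_eq] at ord2
    linarith
  refine ⟨ha, hb0_eq, hb1_eq, ?_⟩
  rw [hcbar, hc, Fin.sum_univ_two, Fin.sum_univ_two, habar, habar, h01, h11, ha, hb0_eq, hb1_eq]
  norm_num
end

section
/- Let c_2 be a real number with c_2 ∉ {0, 1/3, 2/3, 1}, and define the 3-stage explicit Runge–Kutta coefficients a_{21} = c_2, a_{31} = (3c_2 − 1 − 3c_2²)/(c_2(2 − 3c_2)), a_{32} = (1 − c_2)/(c_2(2 − 3c_2)), all other a_{ij} = 0, b_1 = (c_2 − 1/3)/(2c_2), b_2 = 1/(6c_2(1 − c_2)), b_3 = (2 − 3c_2)/(6(1 − c_2)), and c_1 = 0, c_3 = 1. Then for every i ∈ {1,2,3}, Σ_{j=1}^3 b_j·a_{ji} = b_i·(1 − c_i); equivalently, c̄_i = c_i for every i whenever all b_i ≠ 0. -/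
/-!
Since the `b i` sum to `1`, dividing the identity `∑ j, b j * a j i = b i * (1 - c i)` by `b i ≠ 0`
gives `∑ j, (b j - b j * a j i / b i) = 1 - (1 - c i) = c i`. The identity itself is a rational
function identity in `c2` for each of the three values of `i`.
-/

/-- The one-parameter family of 3-stage explicit Runge–Kutta methods of third
order in optimal control satisfies `Σ_j b_j·a_{ji} = b_i·(1 − c_i)` for every
`i`; equivalently `c̄_i = c_i` for every `i` whenever all `b_i ≠ 0`. -/
theorem stmt_3 (c2 : ℝ) (h0 : c2 ≠ 0) (h13 : c2 ≠ 1 / 3) (h23 : c2 ≠ 2 / 3)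
    (h1 : c2 ≠ 1)
    (a : Fin 3 → Fin 3 → ℝ) (b c : Fin 3 → ℝ)
    (ha21 : a 1 0 = c2)
    (ha31 : a 2 0 = (3 * c2 - 1 - 3 * c2 ^ 2) / (c2 * (2 - 3 * c2)))
    (ha32 : a 2 1 = (1 - c2) / (c2 * (2 - 3 * c2)))
    (hz : a 0 0 = 0 ∧ a 0 1 = 0 ∧ a 0 2 = 0 ∧ a 1 1 = 0 ∧ a 1 2 = 0 ∧ a 2 2 = 0)
    (hb1 : b 0 = (c2 - 1 / 3) / (2 * c2))
    (hb2 : b 1 = 1 / (6 * c2 * (1 - c2)))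
    (hb3 : b 2 = (2 - 3 * c2) / (6 * (1 - c2)))
    (hcdef : ∀ i, c i = ∑ j, a i j)
    (hc1 : c 0 = 0) (hc3 : c 2 = 1) :
    (∀ i, ∑ j, b j * a j i = b i * (1 - c i)) ∧
      ((∀ i, b i ≠ 0) → ∀ i, (∑ j, (b j - b j * a j i / b i)) = c i) := by
  obtain ⟨h00, h01, h02, h11, h12, h22⟩ := hz
  have d1 : 1 - c2 ≠ 0 := sub_ne_zero.mpr h1.symm
  -- Written as `c2 * 3`, the form in which `field_simp` looks for the nonvanishing denominator.
  have d2 : 2 - c2 * 3 ≠ 0 := fun h => h23 (by linarith)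
  have hc2 : c 1 = c2 := by
    rw [hcdef, Fin.sum_univ_three, ha21, h11, h12]
    ring
  have hsum : ∑ j, b j = 1 := by
    rw [Fin.sum_univ_three, hb1, hb2, hb3]
    field_simp
    ring
  have key : ∀ i, ∑ j, b j * a j i = b i * (1 - c i) := by
    intro i
    fin_cases i
    · simp only [Fin.sum_univ_three, Fin.zero_eta, h00, ha21, ha31, hc1, hb1, hb2, hb3]
      rw [mul_comm 3 c2]
      field_simp
      ring
    · simp only [Fin.sum_univ_three, Fin.mk_one, h01, h11, ha32, hc2, hb1, hb2, hb3]
      rw [mul_comm 3 c2]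
      field_simp
      ring
    · simp only [Fin.sum_univ_three, Fin.reduceFinMk, h02, h12, h22, hc3]
      ring
  refine ⟨key, fun hb i => ?_⟩
  rw [Finset.sum_sub_distrib, ← Finset.sum_div, key, hsum, mul_div_cancel_left₀ _ (hb i)]
  ring
end

section
/- Let a_{ij}, b_i (1 ≤ i,j ≤ 4, a_{ij} = 0 for j ≥ i) be the coefficients of a 4-stage explicit Runge–Kutta method with all b_i ≠ 0, write c_i = Σ_j a_{ij} (so c_1 = 0), and assume the classical fourth-order conditions: Σ_i b_i = 1, Σ_i b_i c_i = 1/2, Σ_i b_i c_i² = 1/3, Σ_i b_i c_i³ = 1/4, Σ_{i,j} b_i a_{ij} c_j = 1/6, Σ_{i,j} b_i c_i a_{ij} c_j = 1/8, Σ_{i,j} b_i a_{ij} c_j² = 1/12, and Σ_{i,j,k} b_i a_{ij} a_{jk} c_k = 1/24. Then for every i ∈ {1,2,3,4}, Σ_{j=1}^4 b_j·a_{ji} = b_i·(1 − c_i). -/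
/-!
Let `d_i = ∑ j, b_j a_{ji} - b_i (1 - c_i)` be the defect and `w_i = ∑ j, a_{ij} c_j - c_i² / 2`.
The order conditions imply that `d` is orthogonal to `1`, `c`, `c²` and `w`, and that `b` and
`b c` are orthogonal to `w`. Since `c_1 = 0` (index `0` below), the first stage drops out of all these
sums except `∑ d_i = 0`, so the `3 × 3` matrix `U` with rows `b`, `b c`, `d` (stages 2, 3, 4)
satisfies `U w = 0`. Explicitness makes `w ≠ 0`: otherwise `c_2 = c_3 = c_4 = 0` successively, against
`∑ b_i c_i = 1/2`. Hence `U` is singular and its rows satisfy a relation `α b + β b c + γ d = 0`.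
Pairing the relation with `c` and `c²` gives `α/2 + β/3 = α/3 + β/4 = 0`, so `α = β = 0`, `γ ≠ 0`, and
`d` vanishes on stages 2, 3, 4; then `∑ d_i = 0` gives the first stage.
-/

/-- Butcher's fact: any 4-stage explicit Runge–Kutta method satisfying the
classical fourth-order conditions automatically satisfies the simplifying
assumption `Σ_j b_j·a_{ji} = b_i·(1 − c_i)` for every `i`. -/
theorem stmt_4 (a : Fin 4 → Fin 4 → ℝ) (b c : Fin 4 → ℝ)
    (hexp : ∀ i j : Fin 4, i ≤ j → a i j = 0)
    (hb : ∀ i, b i ≠ 0)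
    (hcdef : ∀ i, c i = ∑ j, a i j)
    (o1 : ∑ i, b i = 1)
    (o2 : ∑ i, b i * c i = 1 / 2)
    (o3 : ∑ i, b i * c i ^ 2 = 1 / 3)
    (o4 : ∑ i, b i * c i ^ 3 = 1 / 4)
    (o5 : ∑ i, ∑ j, b i * a i j * c j = 1 / 6)
    (o6 : ∑ i, ∑ j, b i * c i * a i j * c j = 1 / 8)
    (o7 : ∑ i, ∑ j, b i * a i j * c j ^ 2 = 1 / 12)
    (o8 : ∑ i, ∑ j, ∑ k, b i * a i j * a j k * c k = 1 / 24) :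
    ∀ i, ∑ j, b j * a j i = b i * (1 - c i) := by
  have c0 : c 0 = 0 := by
    rw [hcdef]
    exact Finset.sum_eq_zero fun j _ => hexp 0 j (Fin.zero_le j)
  have z11 := hexp 1 1 (by decide)
  have z12 := hexp 1 2 (by decide)
  have z13 := hexp 1 3 (by decide)
  have z22 := hexp 2 2 (by decide)
  have z23 := hexp 2 3 (by decide)
  have z33 := hexp 3 3 (by decide)
  have z00 := hexp 0 0 (by decide)
  have z01 := hexp 0 1 (by decide)
  have z02 := hexp 0 2 (by decide)
  have z03 := hexp 0 3 (by decide)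
  have h1 := hcdef 1
  have h2 := hcdef 2
  have h3 := hcdef 3
  simp only [Fin.sum_univ_four, c0, z01, z02, z03, z11, z12, z13, z22, z23, z33, mul_zero,
    zero_mul, add_zero, zero_add, ne_eq, OfNat.ofNat_ne_zero, not_false_eq_true, zero_pow]
    at h1 h2 h3 o1 o2 o3 o4 o5 o6 o7 o8
  -- The defect on stages 2, 3, 4.
  obtain ⟨d1, hd1⟩ : ∃ d, d = b 2 * a 2 1 + b 3 * a 3 1 - b 1 * (1 - c 1) := ⟨_, rfl⟩
  obtain ⟨d2, hd2⟩ : ∃ d, d = b 3 * a 3 2 - b 2 * (1 - c 2) := ⟨_, rfl⟩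
  obtain ⟨d3, hd3⟩ : ∃ d, d = - (b 3 * (1 - c 3)) := ⟨_, rfl⟩
  have dc : d1 * c 1 + d2 * c 2 + d3 * c 3 = 0 := by
    rw [hd1, hd2, hd3]; linear_combination o5 - o2 + o3
  have dcc : d1 * c 1 ^ 2 + d2 * c 2 ^ 2 + d3 * c 3 ^ 2 = 0 := by
    rw [hd1, hd2, hd3]; linear_combination o7 - o3 + o4
  let U : Matrix (Fin 3) (Fin 3) ℝ :=
    !![b 1, b 2, b 3; b 1 * c 1, b 2 * c 2, b 3 * c 3; d1, d2, d3]
  let w : Fin 3 → ℝ :=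
    ![-(c 1 ^ 2 / 2), a 2 1 * c 1 - c 2 ^ 2 / 2, a 3 1 * c 1 + a 3 2 * c 2 - c 3 ^ 2 / 2]
  have hw : w ≠ 0 := by
    intro h
    have w1 : -(c 1 ^ 2 / 2) = 0 := congrFun h 0
    have w2 : a 2 1 * c 1 - c 2 ^ 2 / 2 = 0 := congrFun h 1
    have w3 : a 3 1 * c 1 + a 3 2 * c 2 - c 3 ^ 2 / 2 = 0 := congrFun h 2
    have e1 : c 1 = 0 := by simpa using w1
    have e2 : c 2 = 0 := by simpa [e1] using w2
    have e3 : c 3 = 0 := by simpa [e1, e2] using w3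
    norm_num [e1, e2, e3] at o2
  have hUw : U.mulVec w = 0 := by
    ext i
    fin_cases i
    · simp [U, w, Matrix.mulVec, dotProduct, Fin.sum_univ_three]
      linear_combination o5 - o3 / 2
    · simp [U, w, Matrix.mulVec, dotProduct, Fin.sum_univ_three]
      linear_combination o6 - o4 / 2
    · simp [U, w, Matrix.mulVec, dotProduct, Fin.sum_univ_three]
      have dw : d2 * (a 2 1 * c 1) + d3 * (a 3 1 * c 1 + a 3 2 * c 2) = 0 := by
        rw [hd2, hd3]; linear_combination o8 - o5 + o6
      linear_combination dw - dcc / 2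
  have hdet : U.det = 0 := Matrix.exists_mulVec_eq_zero_iff.1 ⟨w, hw, hUw⟩
  obtain ⟨x, hx, hxU⟩ := Matrix.exists_vecMul_eq_zero_iff.2 hdet
  have r1 := congrFun hxU 0
  have r2 := congrFun hxU 1
  have r3 := congrFun hxU 2
  simp [U, Matrix.vecMul, dotProduct, Fin.sum_univ_three] at r1 r2 r3
  have p1 : x 0 / 2 + x 1 / 3 = 0 := by
    linear_combination c 1 * r1 + c 2 * r2 + c 3 * r3 - x 0 * o2 - x 1 * o3 - x 2 * dc
  have p2 : x 0 / 3 + x 1 / 4 = 0 := by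
    linear_combination c 1 ^ 2 * r1 + c 2 ^ 2 * r2 + c 3 ^ 2 * r3 - x 0 * o3 - x 1 * o4 - x 2 * dcc
  have x0 : x 0 = 0 := by linarith
  have x1 : x 1 = 0 := by linarith
  have x2 : x 2 ≠ 0 := by
    intro x2
    apply hx
    ext i
    fin_cases i <;> assumption
  have e1 : d1 = 0 := by simpa [x0, x1, x2] using r1
  have e2 : d2 = 0 := by simpa [x0, x1, x2] using r2
  have e3 : d3 = 0 := by simpa [x0, x1, x2] using r3
  rw [e1] at hd1
  rw [e2] at hd2
  rw [e3] at hd3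
  intro i
  fin_cases i
  · simp [Fin.sum_univ_four, c0, z00]
    -- The defects of all four stages sum to `∑ b_i c_i - 1 + ∑ b_i c_i = 0`.
    linear_combination hd1 + hd2 + hd3 - b 1 * h1 - b 2 * h2 - b 3 * h3 + 2 * o2 - o1
  · simp [Fin.sum_univ_four, z01, z11]
    linear_combination -hd1
  · simp [Fin.sum_univ_four, z02, z12, z22]
    linear_combination -hd2
  · simp only [Fin.reduceFinMk, Fin.sum_univ_four, z03, z13, z23, z33]
    linear_combination -hd3
end

section
/- Let s, n be positive integers and a_{ij} (1 ≤ i,j ≤ s) explicit Runge–Kutta coefficients (a_{ij} = 0 for j ≥ i) with c_i = Σ_j a_{ij}. Fix i ∈ {1,...,s}. Suppose that for every dimension d, every C^∞ function f : ℝ^d → ℝ^d that is globally Lipschitz, and every initial condition y(t_0) = y_0 of y' = f(y), there exist C > 0 and h_0 > 0 with ‖y(t_0 + c_i·h) − y_i(h)‖ ≤ C·h^n for all h ∈ (0, h_0], where y_i(h) is the i-th internal stage y_j(h) = y_0 + h·Σ_{k<j} a_{jk}·f(y_k(h)). Then the order conditions Σ_{j=1}^s a_{ij}·c_j^{l−2}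 = c_i^{l−1}/(l−1) must hold for every l = 2, ..., n. -/
/-!
The order conditions are detected by quadrature problems. For a smooth compactly supported `φ`, the
planar field `f (x, z) = (1, φ x)` is smooth and globally Lipschitz. Its solution through the origin
is `(t, ∫₀ᵗ φ)`, and its internal stages are `(c_j h, h ∑ₖ a_{jk} φ(c_k h))`.

With `φ x = x ^ m` near the origin, where `m = l - 2`, the second component of the stage error is
`(c_i ^ (m+1) / (m+1) - ∑ⱼ a_{ij} c_j ^ m) * h ^ (m+1)` for all small `h`. Since it is `O(h ^ n)`
with `n ≥ m + 2`, the coefficient vanishes.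
-/

/-- A monomial `x ^ m` can be cut off outside `[-1, 1]` to a smooth globally Lipschitz function. -/
lemma exists_cutoff_pow (m : ℕ) : ∃ φ : ℝ → ℝ, ContDiff ℝ (⊤ : ℕ∞) φ ∧
    (∃ L : NNReal, LipschitzWith L φ) ∧ ∀ x, |x| ≤ 1 → φ x = x ^ m := by
  let χ : ContDiffBump (0 : ℝ) := ⟨1, 2, by norm_num, by norm_num⟩
  have hsm : ContDiff ℝ (⊤ : ℕ∞) (fun x => χ x * x ^ m) := χ.contDiff.mul (contDiff_id.pow m)
  refine ⟨fun x => χ x * x ^ m, hsm, ?_, ?_⟩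
  · exact hsm.lipschitzWith_of_hasCompactSupport χ.hasCompactSupport.mul_right (by simp)
  · intro x hx
    have : χ x = 1 := χ.one_of_mem_closedBall (by simpa [χ] using hx)
    simp [this]

/-- The planar vector field `(x, z) ↦ (1, φ x)`, whose flow integrates `φ`. -/
noncomputable def quadField (φ : ℝ → ℝ) (v : EuclideanSpace ℝ (Fin 2)) :
    EuclideanSpace ℝ (Fin 2) := !₂[1, φ (v 0)]

lemma quadField_contDiff {φ : ℝ → ℝ} (hφ : ContDiff ℝ (⊤ : ℕ∞) φ) :
    ContDiff ℝ (⊤ : ℕ∞) (quadField φ) := by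
  rw [contDiff_euclidean]
  have h0 : ContDiff ℝ (⊤ : ℕ∞) (fun v : EuclideanSpace ℝ (Fin 2) => v 0) :=
    contDiff_euclidean.1 contDiff_id 0
  intro j
  fin_cases j
  · simpa [quadField] using contDiff_const
  · exact hφ.comp h0

lemma quadField_lipschitz {φ : ℝ → ℝ} {L : NNReal} (hφ : LipschitzWith L φ) :
    LipschitzWith L (quadField φ) := by
  refine LipschitzWith.of_dist_le_mul fun v w => ?_
  have h1 : dist (quadField φ v) (quadField φ w) = dist (φ (v 0)) (φ (w 0)) := by
    simp [EuclideanSpace.dist_eq, quadField, Fin.sum_univ_two, Real.sqrt_sq dist_nonneg]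
  have h2 : dist (v 0) (w 0) ≤ dist v w := by
    simpa [dist_eq_norm] using PiLp.norm_apply_le (v - w) 0
  rw [h1]
  exact (hφ.dist_le_mul _ _).trans (by gcongr)

lemma quadField_solution {φ : ℝ → ℝ} (hφ : Continuous φ) (t : ℝ) :
    HasDerivAt (fun t : ℝ => (!₂[t, ∫ x in (0 : ℝ)..t, φ x] : EuclideanSpace ℝ (Fin 2)))
      (quadField φ !₂[t, ∫ x in (0 : ℝ)..t, φ x]) t := by
  have hpi : HasDerivAt (fun t : ℝ => (![t, ∫ x in (0 : ℝ)..t, φ x] : Fin 2 → ℝ)) ![1, φ t] t := by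
    rw [hasDerivAt_pi]
    intro j
    fin_cases j
    · exact hasDerivAt_id t
    · exact (hφ.integral_hasStrictDerivAt 0 t).hasDerivAt
  exact (PiLp.continuousLinearEquiv 2 ℝ (fun _ : Fin 2 => ℝ)).symm.hasFDerivAt.comp_hasDerivAt t hpi


/-- Necessity direction of Lemma 3.3: if for every smooth globally Lipschitz
vector field and every initial condition the `i`-th internal stage of an
explicit Runge–Kutta method approximates the exact solution at `t_0 + c_i·h`
to order `n`, then the simplifying conditions
`Σ_j a_{ij} c_j^{l−2} = c_i^{l−1}/(l−1)` must hold for `l = 2,…,n`. -/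
theorem stmt_6 (s n : ℕ) (hs : 0 < s) (hn : 0 < n)
    (a : Fin s → Fin s → ℝ) (hexp : ∀ i j : Fin s, i ≤ j → a i j = 0)
    (c : Fin s → ℝ) (hc : ∀ i, c i = ∑ j, a i j)
    (i : Fin s)
    (H : ∀ d : ℕ, 0 < d →
      ∀ f : EuclideanSpace ℝ (Fin d) → EuclideanSpace ℝ (Fin d),
      ContDiff ℝ (⊤ : ℕ∞) f → (∃ L : NNReal, LipschitzWith L f) →
      ∀ (t0 : ℝ) (y0 : EuclideanSpace ℝ (Fin d))
        (y : ℝ → EuclideanSpace ℝ (Fin d)),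
      y t0 = y0 → (∀ t, HasDerivAt y (f (y t)) t) →
      ∀ ystage : ℝ → Fin s → EuclideanSpace ℝ (Fin d),
      (∀ (h : ℝ) (j : Fin s), ystage h j =
        y0 + h • ∑ k ∈ Finset.univ.filter (fun k => k < j), a j k • f (ystage h k)) →
      ∃ C > 0, ∃ h0 > 0, ∀ h ∈ Set.Ioc (0 : ℝ) h0,
        ‖y (t0 + c i * h) - ystage h i‖ ≤ C * h ^ n) :
    ∀ l : ℕ, 2 ≤ l → l ≤ n →
      ∑ j, a i j * c j ^ (l - 2) = c i ^ (l - 1) / ((l : ℝ) - 1) := by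
  intro l hl hln
  obtain ⟨m, rfl⟩ := Nat.exists_eq_add_of_le' hl
  obtain ⟨φ, hφ, ⟨L, hL⟩, hpow⟩ := exists_cutoff_pow m
  -- Explicitness turns the truncated sums of the stage recursion into full sums.
  have hfull : ∀ (j : Fin s) (g : Fin s → ℝ),
      ∑ k ∈ Finset.univ.filter (fun k => k < j), a j k * g k = ∑ k, a j k * g k := by
    intro j g
    refine Finset.sum_filter_of_ne fun k _ hk => ?_
    by_contra hlt
    exact hk (by rw [hexp j k (not_lt.1 hlt), zero_mul])
  obtain ⟨C, hC, h0, hh0, hbound⟩ := H 2 two_pos (quadField φ) (quadField_contDiff hφ)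
    ⟨L, quadField_lipschitz hL⟩ 0 0 (fun t => !₂[t, ∫ x in (0 : ℝ)..t, φ x])
    (by ext j; fin_cases j <;> simp) (quadField_solution hφ.continuous)
    (fun h j => !₂[c j * h, h * ∑ k, a j k * φ (c k * h)])
    (by
      intro h j
      ext r
      fin_cases r
      · have := hfull j (fun _ => 1)
        simp only [mul_one, ← hc] at this
        simp [quadField, this, mul_comm]
      · have := hfull j (fun k => φ (c k * h))
        simp [quadField, this])
  have hm : (0 : ℝ) < m + 1 := by positivity
  set D : ℝ := c i ^ (m + 1) / (m + 1) - ∑ j, a i j * c j ^ m with hD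
  set S : ℝ := 1 + ∑ j, |c j| with hS
  have hS1 : 1 ≤ S := by
    have : 0 ≤ ∑ j, |c j| := Finset.sum_nonneg fun _ _ => abs_nonneg _
    linarith
  have hcS : ∀ j, |c j| ≤ S := fun j => by
    have := Finset.single_le_sum (f := fun j => |c j|) (fun _ _ => abs_nonneg _)
      (Finset.mem_univ j)
    linarith
  have key : ∀ h : ℝ, 0 < h → h ≤ h0 → h ≤ 1 / S → |D| ≤ C * h := by
    intro h hpos hle hleS
    have hhS : S * h ≤ 1 := by
      rw [le_div_iff₀ (by linarith)] at hleS
      linarith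
    have hsmall : ∀ j, |c j * h| ≤ 1 := fun j => by
      rw [abs_mul, abs_of_pos hpos]
      exact (mul_le_mul_of_nonneg_right (hcS j) hpos.le).trans hhS
    have hh1 : h ≤ 1 := by nlinarith
    have hint : ∫ x in (0 : ℝ)..(c i * h), φ x = (c i * h) ^ (m + 1) / (m + 1) := by
      have : ∫ x in (0 : ℝ)..(c i * h), φ x = ∫ x in (0 : ℝ)..(c i * h), x ^ m := by
        refine intervalIntegral.integral_congr fun x hx => hpow x ?_
        have := Set.abs_sub_left_of_mem_uIcc hx
        simp only [sub_zero] at this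
        exact this.trans (hsmall i)
      rw [this, integral_pow]
      simp
    have hb := (PiLp.norm_apply_le _ 1).trans (hbound h ⟨hpos, hle⟩)
    have herr : (∫ x in (0 : ℝ)..(c i * h), φ x) - h * ∑ k, a i k * φ (c k * h)
        = D * h ^ (m + 1) := by
      rw [hint, hD, sub_mul, Finset.mul_sum, Finset.sum_mul]
      congr 1
      · ring
      · refine Finset.sum_congr rfl fun k _ => ?_
        rw [hpow _ (hsmall k)]
        ring
    have hb' : |D * h ^ (m + 1)| ≤ C * h ^ n := by
      rw [← herr]
      simpa using hb
    rw [abs_mul, abs_of_pos (pow_pos hpos _)] at hb'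
    have hn' : h ^ n ≤ h ^ (m + 2) := pow_le_pow_of_le_one hpos.le hh1 hln
    refine le_of_mul_le_mul_right ?_ (pow_pos hpos (m + 1))
    calc |D| * h ^ (m + 1) ≤ C * h ^ n := hb'
      _ ≤ C * h ^ (m + 2) := by gcongr
      _ = C * h * h ^ (m + 1) := by ring
  have hD0 : D = 0 := by
    by_contra hne
    have hDpos : 0 < |D| := abs_pos.2 hne
    set h : ℝ := min (min h0 (1 / S)) (|D| / (2 * C)) with hh
    have hpos : 0 < h := by
      have : 0 < 1 / S := by positivity
      exact lt_min (lt_min hh0 this) (by positivity)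
    have h1 := key h hpos ((min_le_left _ _).trans (min_le_left _ _))
      ((min_le_left _ _).trans (min_le_right _ _))
    have h2 : h ≤ |D| / (2 * C) := min_le_right _ _
    rw [le_div_iff₀ (by positivity)] at h2
    linarith
  have e1 : m + 2 - 2 = m := by omega
  have e2 : m + 2 - 1 = m + 1 := by omega
  have e3 : ((m + 2 : ℕ) : ℝ) - 1 = m + 1 := by push_cast; ring
  rw [e1, e2, e3]
  linarith
end

section
/- Let c_2 ∈ ℝ with c_2 ∉ {0, 1/3, 2/3, 1}, and consider the 3-stage explicit Runge–Kutta method with a_{21} = c_2, a_{31} = (3c_2 − 1 − 3c_2²)/(c_2(2 − 3c_2)), a_{32} = (1 − c_2)/(c_2(2 − 3c_2)), b_1 = (3c_2 − 1)/(6c_2), b_2 = 1/(6c_2(1 − c_2)), b_3 = (2 − 3c_2)/(6(1 − c_2)), c_1 = 0, c_3 = 1, and adjoint coefficients ā_{ij} = b_j − b_j·a_{ji}/b_1 for i = 1 (i.e., ā_{1j} = b_j − b_j·a_{j1}/b_1). Then Σ_{j=1}^3 ā_{1j}·c_j = (1 − c_2)/(2(3c_2 − 1)) ≠ 0; in particular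 the third-order internal-stage condition Σ_j ā_{1j}·c_j = c_1²/2 = 0 fails for every admissible c_2, so no 3-stage explicit Runge–Kutta method of third order in optimal control can produce a third-order first internal-stage control. -/
/-!
Since `c₁ = 0` and `c₃ = 1`, the sum `∑_j ā_{1j} c_j` equals
`∑_j b_j c_j - (∑_j b_j a_{j1} c_j) / b₁`. The first term is `1/2` and the numerator of the second
is `(2 c₂ - 1) / (6 c₂)`, so dividing by `b₁ = (3 c₂ - 1) / (6 c₂)` gives
`1/2 - (2 c₂ - 1) / (3 c₂ - 1) = (1 - c₂) / (2 (3 c₂ - 1))`, which vanishes only at `c₂ = 1`.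
-/

/-- For the general 3-stage explicit Runge–Kutta method of third order in
optimal control (parameter `c₂ ∉ {0, 1/3, 2/3, 1}`), the first row of adjoint
coefficients satisfies `Σ_j ā_{1j}·c_j = (1 − c₂)/(2(3c₂ − 1)) ≠ 0`, so the
third-order internal-stage condition `Σ_j ā_{1j}·c_j = c₁²/2 = 0` fails. -/
theorem stmt_10 (c2 : ℝ) (h0 : c2 ≠ 0) (h13 : c2 ≠ 1 / 3) (h23 : c2 ≠ 2 / 3)
    (h1 : c2 ≠ 1)
    (a21 a31 a32 b1 b2 b3 c1 c3 : ℝ)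
    (ha21 : a21 = c2)
    (ha31 : a31 = (3 * c2 - 1 - 3 * c2 ^ 2) / (c2 * (2 - 3 * c2)))
    (ha32 : a32 = (1 - c2) / (c2 * (2 - 3 * c2)))
    (hb1 : b1 = (3 * c2 - 1) / (6 * c2))
    (hb2 : b2 = 1 / (6 * c2 * (1 - c2)))
    (hb3 : b3 = (2 - 3 * c2) / (6 * (1 - c2)))
    (hc1 : c1 = 0) (hc3 : c3 = 1)
    (abar11 abar12 abar13 : ℝ)
    (h11 : abar11 = b1 - b1 * 0 / b1)
    (h12 : abar12 = b2 - b2 * a21 / b1)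
    (h13' : abar13 = b3 - b3 * a31 / b1) :
    abar11 * c1 + abar12 * c2 + abar13 * c3 = (1 - c2) / (2 * (3 * c2 - 1)) ∧
      (1 - c2) / (2 * (3 * c2 - 1)) ≠ 0 ∧
      abar11 * c1 + abar12 * c2 + abar13 * c3 ≠ c1 ^ 2 / 2 := by
  have hd1 : 1 - c2 ≠ 0 := sub_ne_zero.mpr h1.symm
  have hd2 : 2 - 3 * c2 ≠ 0 := fun h => h23 (by linarith)
  have hd3 : 3 * c2 - 1 ≠ 0 := fun h => h13 (by linarith)
  -- `field_simp` writes the monomial `3 * c2` as `c2 * 3` in denominators.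
  have hd2' : 2 - c2 * 3 ≠ 0 := by rwa [mul_comm c2 3]
  have hd3' : c2 * 3 - 1 ≠ 0 := by rwa [mul_comm c2 3]
  have hne : (1 - c2) / (2 * (3 * c2 - 1)) ≠ 0 :=
    div_ne_zero hd1 (mul_ne_zero two_ne_zero hd3)
  -- The order-two condition `∑ b_j c_j = 1/2`.
  have hbc : b2 * c2 + b3 = 1 / 2 := by
    subst hb2 hb3
    field_simp
    ring
  -- The numerator `3 c₂ - 1 - 2 c₂²` factors as `(2 c₂ - 1) (1 - c₂)`, which cancels `1 - c₂`.
  have hbac : b2 * a21 * c2 + b3 * a31 = (2 * c2 - 1) / (6 * c2) := by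
    subst hb2 hb3 ha21 ha31
    field_simp
    ring
  have hsum : abar11 * c1 + abar12 * c2 + abar13 * c3
      = (1 - c2) / (2 * (3 * c2 - 1)) := by
    calc abar11 * c1 + abar12 * c2 + abar13 * c3
        = (b2 * c2 + b3) - (b2 * a21 * c2 + b3 * a31) / b1 := by
          rw [hc1, hc3, h12, h13']
          ring
      _ = (1 - c2) / (2 * (3 * c2 - 1)) := by
          rw [hbc, hbac, hb1]
          field_simp
          ring
  refine ⟨hsum, hne, ?_⟩
  rw [hsum, hc1]
  simpa using hne
end

section
/- Let Q be a symmetric positive semidefinite p×p real matrix, R a symmetric positive definite q×q real matrix, M a symmetric positive semidefinite n×n real matrix, E ∈ ℝ^{p×n}, F ∈ ℝ^{p×q}, G ∈ ℝ^{n×n}, H ∈ ℝ^{n×q}, and set L = −(FᵀQF + R + HᵀMH)⁻¹(FᵀQE + HᵀMG) and M₋ = (E + FL)ᵀQ(E + FL) + LᵀRL + (G + HL)ᵀM(G + HL). Then M₋ is symmetric positive semidefinite and, for every x ∈ ℝ^n, min over U ∈ ℝ^q of ½(Ex + FU)ᵀQ(Ex + FU) + ½UᵀRU + ½(Gx + HU)ᵀM(Gx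 + HU) equals ½xᵀM₋x. -/
open Matrix

/-!
The gain `L` is chosen so that the stationarity equation
`Fᵀ Q (E + F L) + R L + Hᵀ M (G + H L) = 0` holds; the matrix inverted in its definition is
positive definite because `R` is. Writing `U = L x + d` and expanding each quadratic form
around `d = 0`, the constant terms add up to `½ xᵀ M₋ x`, the terms linear in `d` cancel by
stationarity, and the terms quadratic in `d` are nonnegative. Hence the minimum is attained at
`U = L x`. Positive semidefiniteness of `M₋` is that of a sum of congruences.
-/

lemma quadForm_add {m : ℕ} {S : Matrix (Fin m) (Fin m) ℝ} (hS : S.PosSemidef)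
    (a b : Fin m → ℝ) :
    (a + b) ⬝ᵥ (S *ᵥ (a + b)) = a ⬝ᵥ (S *ᵥ a) + 2 * (b ⬝ᵥ (S *ᵥ a)) + b ⬝ᵥ (S *ᵥ b) := by
  have hT : Sᵀ = S := by simpa using hS.isHermitian.eq
  have h : a ⬝ᵥ (S *ᵥ b) = b ⬝ᵥ (S *ᵥ a) := by
    rw [dotProduct_mulVec, ← mulVec_transpose, hT, dotProduct_comm]
  simp only [mulVec_add, dotProduct_add, add_dotProduct, h]
  ring

lemma quadForm_nonneg {m : ℕ} {S : Matrix (Fin m) (Fin m) ℝ} (hS : S.PosSemidef)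
    (a : Fin m → ℝ) : 0 ≤ a ⬝ᵥ (S *ᵥ a) := by
  simpa using hS.dotProduct_mulVec_nonneg a

lemma dotProduct_congruence {k l m : ℕ} (A : Matrix (Fin m) (Fin k) ℝ)
    (S : Matrix (Fin m) (Fin m) ℝ) (B : Matrix (Fin m) (Fin l) ℝ)
    (d : Fin k → ℝ) (x : Fin l → ℝ) :
    d ⬝ᵥ ((Aᵀ * S * B) *ᵥ x) = (A *ᵥ d) ⬝ᵥ (S *ᵥ (B *ᵥ x)) := by
  rw [← mulVec_mulVec, ← mulVec_mulVec, dotProduct_mulVec, vecMul_transpose]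

lemma posSemidef_congruence {k m : ℕ} {S : Matrix (Fin m) (Fin m) ℝ} (hS : S.PosSemidef)
    (A : Matrix (Fin m) (Fin k) ℝ) : (Aᵀ * S * A).PosSemidef := by
  simpa using hS.conjTranspose_mul_mul_same A

/-- Riccati-type recursion of the DLQR method: with
`L = −(FᵀQF + R + HᵀMH)⁻¹(FᵀQE + HᵀMG)` and
`M₋ = (E+FL)ᵀQ(E+FL) + LᵀRL + (G+HL)ᵀM(G+HL)`, the matrix `M₋` is symmetric
positive semidefinite and the minimum over `U` of the discrete HJB right-hand
side equals `½xᵀM₋x` for every `x`. -/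
theorem stmt_12 (p q n : ℕ)
    (Q : Matrix (Fin p) (Fin p) ℝ) (hQ : Q.PosSemidef)
    (R : Matrix (Fin q) (Fin q) ℝ) (hR : R.PosDef)
    (M : Matrix (Fin n) (Fin n) ℝ) (hM : M.PosSemidef)
    (E : Matrix (Fin p) (Fin n) ℝ) (F : Matrix (Fin p) (Fin q) ℝ)
    (G : Matrix (Fin n) (Fin n) ℝ) (H : Matrix (Fin n) (Fin q) ℝ)
    (L : Matrix (Fin q) (Fin n) ℝ)
    (hL : L = -((Fᵀ * Q * F + R + Hᵀ * M * H)⁻¹ * (Fᵀ * Q * E + Hᵀ * M * G)))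
    (Mm : Matrix (Fin n) (Fin n) ℝ)
    (hMm : Mm = (E + F * L)ᵀ * Q * (E + F * L) + Lᵀ * R * L +
      (G + H * L)ᵀ * M * (G + H * L))
    (V : (Fin n → ℝ) → (Fin q → ℝ) → ℝ)
    (hV : ∀ x U, V x U =
      (1 / 2) * ((E *ᵥ x + F *ᵥ U) ⬝ᵥ (Q *ᵥ (E *ᵥ x + F *ᵥ U))) +
      (1 / 2) * (U ⬝ᵥ (R *ᵥ U)) +
      (1 / 2) * ((G *ᵥ x + H *ᵥ U) ⬝ᵥ (M *ᵥ (G *ᵥ x + H *ᵥ U)))) :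
    Mm.PosSemidef ∧
      ∀ x : Fin n → ℝ,
        IsLeast (Set.range (V x)) ((1 / 2) * (x ⬝ᵥ (Mm *ᵥ x))) := by
  have hW : (Fᵀ * Q * F + R + Hᵀ * M * H).PosDef :=
    (hR.posSemidef_add (posSemidef_congruence hQ F)).add_posSemidef (posSemidef_congruence hM H)
  have hstat : Fᵀ * Q * (E + F * L) + R * L + Hᵀ * M * (G + H * L) = 0 := by
    have h1 : (Fᵀ * Q * F + R + Hᵀ * M * H) * L = -(Fᵀ * Q * E + Hᵀ * M * G) := by
      rw [hL, Matrix.mul_neg, Matrix.mul_nonsing_inv_cancel_left _ _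
        ((Matrix.isUnit_iff_isUnit_det _).1 hW.isUnit)]
    have h2 : Fᵀ * Q * (E + F * L) + R * L + Hᵀ * M * (G + H * L)
        = (Fᵀ * Q * F + R + Hᵀ * M * H) * L + (Fᵀ * Q * E + Hᵀ * M * G) := by
      simp only [Matrix.mul_add, Matrix.add_mul, Matrix.mul_assoc]
      abel
    rw [h2, h1, neg_add_cancel]
  have hquad : ∀ x, x ⬝ᵥ (Mm *ᵥ x) =
      ((E + F * L) *ᵥ x) ⬝ᵥ (Q *ᵥ ((E + F * L) *ᵥ x)) + (L *ᵥ x) ⬝ᵥ (R *ᵥ (L *ᵥ x)) +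
      ((G + H * L) *ᵥ x) ⬝ᵥ (M *ᵥ ((G + H * L) *ᵥ x)) := by
    intro x
    simp only [hMm, add_mulVec _ _ x, dotProduct_add x, dotProduct_congruence]
  have hexp : ∀ x d, V x (L *ᵥ x + d) = (1 / 2) * (x ⬝ᵥ (Mm *ᵥ x)) +
      (1 / 2) * ((F *ᵥ d) ⬝ᵥ (Q *ᵥ (F *ᵥ d)) + d ⬝ᵥ (R *ᵥ d) +
        (H *ᵥ d) ⬝ᵥ (M *ᵥ (H *ᵥ d))) := by
    intro x d
    have hE : E *ᵥ x + F *ᵥ (L *ᵥ x + d) = (E + F * L) *ᵥ x + F *ᵥ d := by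
      rw [mulVec_add, add_mulVec, mulVec_mulVec, add_assoc]
    have hG : G *ᵥ x + H *ᵥ (L *ᵥ x + d) = (G + H * L) *ᵥ x + H *ᵥ d := by
      rw [mulVec_add, add_mulVec, mulVec_mulVec, add_assoc]
    have hlin : (F *ᵥ d) ⬝ᵥ (Q *ᵥ ((E + F * L) *ᵥ x)) + d ⬝ᵥ (R *ᵥ (L *ᵥ x)) +
        (H *ᵥ d) ⬝ᵥ (M *ᵥ ((G + H * L) *ᵥ x)) = 0 := by
      rw [← dotProduct_congruence, ← dotProduct_congruence, mulVec_mulVec x R L,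
        ← dotProduct_add, ← dotProduct_add, ← add_mulVec, ← add_mulVec, hstat,
        zero_mulVec, dotProduct_zero]
    rw [hV, hE, hG, quadForm_add hQ, quadForm_add hR.posSemidef, quadForm_add hM, hquad]
    linear_combination hlin
  refine ⟨?_, fun x => ⟨⟨L *ᵥ x, ?_⟩, ?_⟩⟩
  · rw [hMm]
    exact ((posSemidef_congruence hQ _).add (posSemidef_congruence hR.posSemidef _)).add
      (posSemidef_congruence hM _)
  · simpa using hexp x 0
  · rintro _ ⟨U, rfl⟩
    have h := hexp x (U - L *ᵥ x)
    rw [add_sub_cancel] at h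
    rw [h]
    have h1 := quadForm_nonneg hQ (F *ᵥ (U - L *ᵥ x))
    have h2 := quadForm_nonneg hR.posSemidef (U - L *ᵥ x)
    have h3 := quadForm_nonneg hM (H *ᵥ (U - L *ᵥ x))
    linarith
end

section
/- Define g : ℝ → ℝ by g(u) = u² + 1 and j : ℝ → ℝ by j(u) = ½·g(u)² + ½·u², and define W : ℝ → ℝ by W(u) = 1 + (g'(u))². Then u* = 0 is the unique critical point and the unique global minimizer of j, and j''(u*) − W(u*) = g''(u*)·g(u*) = 2 ≠ 0. -/
/-!
Everything follows from the closed forms `g' u = 2 * u` and `j' u = 2 * u ^ 3 + 3 * u`: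
the latter factors as `u * (2 * u ^ 2 + 3)`, so it vanishes only at `0`, while
`j'' 0 = 3`, `W 0 = 1`, `g'' 0 = 2` and `g 0 = 1`. Strict minimality is the identity
`j u - j 0 = u ^ 4 / 2 + 3 * u ^ 2 / 2`.
-/

/-- The paper's counterexample to superlinear convergence of ILQR: with
`g(u) = u² + 1`, `j(u) = ½g(u)² + ½u²` and `W(u) = 1 + (g'(u))²`, the point
`u* = 0` is the unique critical point and unique global minimizer of `j`, and
`j''(u*) − W(u*) = g''(u*)·g(u*) = 2 ≠ 0`. -/
theorem stmt_18 (g j W : ℝ → ℝ)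
    (hg : ∀ u, g u = u ^ 2 + 1)
    (hj : ∀ u, j u = (1 / 2) * (g u) ^ 2 + (1 / 2) * u ^ 2)
    (hW : ∀ u, W u = 1 + (deriv g u) ^ 2) :
    (∀ u, deriv j u = 0 ↔ u = 0) ∧
    (∀ u, u ≠ 0 → j 0 < j u) ∧
    deriv (deriv j) 0 - W 0 = deriv (deriv g) 0 * g 0 ∧
    deriv (deriv g) 0 * g 0 = 2 ∧
    deriv (deriv j) 0 - W 0 ≠ 0 := by
  have hg' : deriv g = fun u => 2 * u := by
    funext u
    have h : HasDerivAt g (2 * u) u := by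
      rw [funext hg]
      simpa using (hasDerivAt_pow 2 u).add_const (1 : ℝ)
    exact h.deriv
  have hj' : deriv j = fun u => 2 * u ^ 3 + 3 * u := by
    funext u
    have h : HasDerivAt j (2 * u ^ 3 + 3 * u) u := by
      have e : j = fun u => (1 / 2) * (u ^ 2 + 1) ^ 2 + (1 / 2) * u ^ 2 := by
        funext v
        rw [hj, hg]
      rw [e]
      have h2 := hasDerivAt_pow 2 u
      have h3 := (((h2.add_const (1 : ℝ)).fun_pow 2).const_mul (1 / 2 : ℝ)).fun_add
        (h2.const_mul (1 / 2 : ℝ))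
      exact h3.congr_deriv (by norm_num; ring)
    exact h.deriv
  have hg'' : deriv (deriv g) 0 = 2 := by
    rw [hg']
    simp
  have hj'' : deriv (deriv j) 0 = 3 := by
    rw [hj']
    have h := ((hasDerivAt_pow 3 (0 : ℝ)).const_mul 2).fun_add
      ((hasDerivAt_id' (0 : ℝ)).const_mul 3)
    simpa using h.deriv
  have hW0 : W 0 = 1 := by simp [hW, hg']
  have hg0 : g 0 = 1 := by simp [hg]
  refine ⟨fun u => ?_, fun u hu => ?_, ?_, ?_, ?_⟩
  · rw [hj']
    constructor
    · intro h
      -- `j' u = u * (2 * u ^ 2 + 3)`, and the second factor is positive.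
      have h' : u * (2 * u ^ 2 + 3) = 0 := by linear_combination h
      exact (mul_eq_zero.mp h').resolve_right (by positivity)
    · rintro rfl
      simp
  · -- `j u - j 0 = u ^ 4 / 2 + 3 * u ^ 2 / 2`.
    have hpos : 0 < u ^ 2 := by positivity
    rw [hj, hj, hg, hg]
    nlinarith [sq_nonneg (u ^ 2)]
  · rw [hj'', hW0, hg'', hg0]
    norm_num
  · rw [hg'', hg0]
    norm_num
  · rw [hj'', hW0]
    norm_num
end
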